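/- arXiv:2202.05990 — 2 statements merged into one kernel-verified Lean document; each statement's English description precedes it below -/
import Mathlib

section
/- Convergence of the in-H-index to k_max (Theorem 4.1): for every finite directed graph G and every vertex v, the non-increasing sequence n ↦ iH_G^(n)(v) is eventually constant, and its eventual value equals k_max(v), i.e., k_max(v) = iH_G^(∞)(v). -/
open Finset

variable {V : Type*} [Fintype V] [DecidableEq V]

/-- The in-neighbors of `v` within `S`: vertices `u ∈ S` with an edge `u → v`. -/
def inN (E : V → V → Prop) [DecidableRel E] (S : Finset V) (v : V) : Finset V :=
  S.filter (fun u => E u v)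

/-- The out-neighbors of `v` within `S`: vertices `u ∈ S` with an edge `v → u`. -/
def outN (E : V → V → Prop) [DecidableRel E] (S : Finset V) (v : V) : Finset V :=
  S.filter (fun u => E v u)

/-- `S` satisfies the `(k,l)`-degree constraints: every `v ∈ S` has at least `k`
in-neighbors in `S` and at least `l` out-neighbors in `S`. -/
def satisfiesKL (E : V → V → Prop) [DecidableRel E] (k l : ℕ) (S : Finset V) : Prop :=
  ∀ v ∈ S, k ≤ (inN E S v).card ∧ l ≤ (outN E S v).card

instance (E : V → V → Prop) [DecidableRel E] (k l : ℕ) (S : Finset V) :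
    Decidable (satisfiesKL E k l S) := by unfold satisfiesKL; infer_instance

/-- The `(k,l)`-core of the graph: the union of all vertex subsets satisfying the
`(k,l)`-degree constraints. -/
def core (E : V → V → Prop) [DecidableRel E] (k l : ℕ) : Finset V :=
  (Finset.univ.powerset.filter (satisfiesKL E k l)).sup id

/-- `kmax E v`: the largest `k` such that `v` belongs to the `(k,0)`-core. -/
noncomputable def kmax (E : V → V → Prop) [DecidableRel E] (v : V) : ℕ :=
  sSup {k : ℕ | v ∈ core E k 0}

/-- `lmax E v k`: the largest `l` such that `v` belongs to the `(k,l)`-core. -/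
noncomputable def lmax (E : V → V → Prop) [DecidableRel E] (v : V) (k : ℕ) : ℕ :=
  sSup {l : ℕ | v ∈ core E k l}

/-- The H-index of a finite multiset of naturals: the largest `h` such that at least
`h` elements (with multiplicity) are `≥ h`. -/
noncomputable def hIndex (M : Multiset ℕ) : ℕ :=
  sSup {h : ℕ | h ≤ (M.filter (fun x => h ≤ x)).card}

/-- The `n`-order in-H-index of a vertex `v` in the graph with vertex set `S`
and edge relation `E`. -/
noncomputable def iH (E : V → V → Prop) [DecidableRel E] (S : Finset V) : ℕ → V → ℕ
  | 0 => fun v => (inN E S v).card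
  | n + 1 => fun v => hIndex ((inN E S v).val.map (iH E S n))

/-- The `n`-order out-H-index of a vertex `v` in the graph with vertex set `S`
and edge relation `E`. -/
noncomputable def oH (E : V → V → Prop) [DecidableRel E] (S : Finset V) : ℕ → V → ℕ
  | 0 => fun v => (outN E S v).card
  | n + 1 => fun v => hIndex ((outN E S v).val.map (oH E S n))

/-- The eventual (limit) value of the in-H-index sequence. -/
noncomputable def iHlim (E : V → V → Prop) [DecidableRel E] (S : Finset V) (v : V) : ℕ :=
  ⨅ n, iH E S n v

/-- The eventual (limit) value of the out-H-index sequence. -/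
noncomputable def oHlim (E : V → V → Prop) [DecidableRel E] (S : Finset V) (v : V) : ℕ :=
  ⨅ n, oH E S n v

/-- `(k,l)` is a skyline coreness of `v`: `v` is in the `(k,l)`-core and there is no
pair `(k',l')` strictly dominating `(k,l)` with `v` in the `(k',l')`-core. -/
def skyline (E : V → V → Prop) [DecidableRel E] (v : V) (p : ℕ × ℕ) : Prop :=
  v ∈ core E p.1 p.2 ∧
    ¬ ∃ q : ℕ × ℕ, (p.1 ≤ q.1 ∧ p.2 ≤ q.2 ∧ p ≠ q) ∧ v ∈ core E q.1 q.2

/-!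
Taking H-indices is monotone and never exceeds the in-degree, so the sequences decrease and, being
natural-valued, stabilise; their limit `iHlim` is then a fixed point of the H-index operator. A set
in which every vertex has at least `k` in-neighbors keeps all its values at `k` or above under the
iteration, so it lies in `{u | k ≤ iHlim u}`. Conversely, the fixed-point equation says precisely
that this superlevel set satisfies the `(k, 0)`-degree constraints. Hence it is the `(k, 0)`-core.
-/

section HIndex

variable {α : Type*} {M : Multiset ℕ} {s : Finset α} {f g : α → ℕ} {k : ℕ}

theorem le_hIndex_iff : k ≤ hIndex M ↔ k ≤ (M.filter (k ≤ ·)).card := by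
  have bdd : BddAbove {h : ℕ | h ≤ (M.filter (h ≤ ·)).card} :=
    ⟨M.card, fun _ hh => hh.trans (Multiset.card_le_card (Multiset.filter_le _ M))⟩
  refine ⟨fun hk => ?_, le_csSup bdd⟩
  have attained : hIndex M ≤ (M.filter (hIndex M ≤ ·)).card :=
    Nat.sSup_mem (s := {h | h ≤ (M.filter (h ≤ ·)).card}) ⟨0, Nat.zero_le _⟩ bdd
  calc k ≤ hIndex M := hk
    _ ≤ (M.filter (hIndex M ≤ ·)).card := attained
    _ ≤ (M.filter (k ≤ ·)).card :=
      Multiset.card_le_card (Multiset.monotone_filter_right M fun _ => hk.trans)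

theorem hIndex_le_card (M : Multiset ℕ) : hIndex M ≤ M.card :=
  (le_hIndex_iff.1 le_rfl).trans (Multiset.card_le_card (Multiset.filter_le _ M))

theorem le_hIndex_map_iff : k ≤ hIndex (s.val.map f) ↔ k ≤ #{u ∈ s | k ≤ f u} := by
  rw [le_hIndex_iff, Multiset.filter_map, Multiset.card_map]
  rfl

theorem hIndex_map_mono (hfg : ∀ u ∈ s, f u ≤ g u) :
    hIndex (s.val.map f) ≤ hIndex (s.val.map g) := by
  refine le_hIndex_map_iff.2 ((le_hIndex_map_iff.1 le_rfl).trans (card_le_card fun u hu => ?_))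
  obtain ⟨hus, hle⟩ := mem_filter.1 hu
  exact mem_filter.2 ⟨hus, hle.trans (hfg u hus)⟩

end HIndex

section InHIndex

variable {W : Type*} {E : W → W → Prop} [DecidableRel E] {S T : Finset W} {k l : ℕ} {v : W}

theorem iH_succ_le (E : W → W → Prop) [DecidableRel E] (S : Finset W) (n : ℕ) (v : W) :
    iH E S (n + 1) v ≤ iH E S n v := by
  induction n generalizing v with
  | zero => exact (hIndex_le_card _).trans_eq (Multiset.card_map _ _)
  | succ n ih => exact hIndex_map_mono fun u _ => ih u

theorem eventually_iH_eq_iHlim (E : W → W → Prop) [DecidableRel E] (S : Finset W) (v : W) :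
    ∀ᶠ n in Filter.atTop, iH E S n v = iHlim E S v := by
  have anti : Antitone fun n => iH E S n v := antitone_nat_of_succ_le fun n => iH_succ_le E S n v
  have lim := tendsto_atTop_ciInf anti (OrderBot.bddBelow _)
  rwa [nhds_discrete, Filter.tendsto_pure] at lim

theorem hIndex_map_iHlim (E : W → W → Prop) [DecidableRel E] (S : Finset W) (v : W) :
    hIndex ((inN E S v).val.map (iHlim E S)) = iHlim E S v := by
  have stable_inN : ∀ᶠ n in Filter.atTop, ∀ u ∈ inN E S v, iH E S n u = iHlim E S u :=
    (Filter.eventually_all_finset _).2 fun u _ => eventually_iH_eq_iHlim E S u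
  have stable_succ : ∀ᶠ n in Filter.atTop, iH E S (n + 1) v = iHlim E S v :=
    (Filter.tendsto_add_atTop_nat 1).eventually (eventually_iH_eq_iHlim E S v)
  obtain ⟨n, hn_inN, hn_succ⟩ := (stable_inN.and stable_succ).exists
  calc hIndex ((inN E S v).val.map (iHlim E S))
      = hIndex ((inN E S v).val.map (iH E S n)) := by
        rw [Multiset.map_congr rfl hn_inN]
    _ = iHlim E S v := hn_succ

theorem inN_mono (hST : S ⊆ T) (v : W) : inN E S v ⊆ inN E T v :=
  filter_subset_filter _ hST

theorem inN_filter (p : W → Prop) [DecidablePred p] :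
    inN E {u ∈ S | p u} v = {u ∈ inN E S v | p u} :=
  filter_comm ..

theorem le_iH_of_satisfiesKL (hS : satisfiesKL E k l S) (hST : S ⊆ T) (n : ℕ) (hv : v ∈ S) :
    k ≤ iH E T n v := by
  induction n generalizing v with
  | zero => exact (hS v hv).1.trans (card_le_card (inN_mono hST v))
  | succ n ih =>
    have inN_subset : inN E S v ⊆ {u ∈ inN E T v | k ≤ iH E T n u} := fun u hu =>
      mem_filter.2 ⟨inN_mono hST v hu, ih (mem_filter.1 hu).1⟩
    exact le_hIndex_map_iff.2 ((hS v hv).1.trans (card_le_card inN_subset))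

theorem le_iHlim_of_satisfiesKL (hS : satisfiesKL E k l S) (hST : S ⊆ T) (hv : v ∈ S) :
    k ≤ iHlim E T v :=
  le_ciInf fun n => le_iH_of_satisfiesKL hS hST n hv

theorem satisfiesKL_filter_le_iHlim (E : W → W → Prop) [DecidableRel E] (S : Finset W) (k : ℕ) :
    satisfiesKL E k 0 {u ∈ S | k ≤ iHlim E S u} := by
  intro u hu
  have hk : k ≤ hIndex ((inN E S u).val.map (iHlim E S)) :=
    (mem_filter.1 hu).2.trans_eq (hIndex_map_iHlim E S u).symm
  rw [inN_filter]
  exact ⟨le_hIndex_map_iff.1 hk, Nat.zero_le _⟩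

end InHIndex

section Core

variable {E : V → V → Prop} [DecidableRel E] {k l : ℕ} {v : V}

theorem mem_core_iff : v ∈ core E k l ↔ ∃ S, satisfiesKL E k l S ∧ v ∈ S := by
  simp [core, mem_sup]

theorem mem_core_zero_iff_le_iHlim : v ∈ core E k 0 ↔ k ≤ iHlim E univ v := by
  rw [mem_core_iff]
  constructor
  · rintro ⟨S, hS, hv⟩
    exact le_iHlim_of_satisfiesKL hS (subset_univ S) hv
  · intro hk
    exact ⟨_, satisfiesKL_filter_le_iHlim E univ k, mem_filter.2 ⟨mem_univ v, hk⟩⟩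

end Core

/-- **Theorem 4.1: Convergence of the in-H-index to `kmax`.** The
non-increasing sequence `n ↦ iH_G^(n)(v)` is eventually constant with eventual value
`iH_G^(∞)(v)`, and `kmax v = iH_G^(∞)(v)`. -/
theorem kmax_eq_iHlim (E : V → V → Prop) [DecidableRel E] (v : V) :
    (∀ n : ℕ, iH E Finset.univ (n + 1) v ≤ iH E Finset.univ n v) ∧
    (∃ N : ℕ, ∀ n : ℕ, N ≤ n → iH E Finset.univ n v = iHlim E Finset.univ v) ∧
    kmax E v = iHlim E Finset.univ v := by
  refine ⟨fun n => iH_succ_le E univ n v,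
    Filter.eventually_atTop.1 (eventually_iH_eq_iHlim E univ v), ?_⟩
  calc kmax E v = sSup (Set.Iic (iHlim E univ v)) :=
        congrArg sSup (Set.ext fun _ => mem_core_zero_iff_le_iHlim)
    _ = iHlim E univ v := csSup_Iic
end

section
/- Property 5.1(I): let G be a finite directed graph, v a vertex, and (k_v, l_v) a skyline coreness of v. Then v has at least k_v in-neighbors v' in G such that some skyline coreness (k',l') of v' satisfies k_v ≤ k' and l_v ≤ l', and v has at least l_v out-neighbors v'' in G such that some skyline coreness (k'',l'') of v'' satisfies k_v ≤ k'' and l_v ≤ l''. -/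
open Finset

variable {V : Type*} [Fintype V] [DecidableEq V]

/-! The `(k,l)`-core itself satisfies the `(k,l)`-degree constraints, so a vertex of it has enough
neighbors inside it. The pairs whose core contains a given vertex are bounded by the number of
vertices, so each of them lies below a maximal one, which is a skyline coreness. Hence the
`(k,l)`-core consists exactly of the vertices with a skyline coreness dominating `(k,l)`. -/

section CoreAndSkyline

variable {E : V → V → Prop} [DecidableRel E] {k l : ℕ} {v : V}

theorem mem_core : v ∈ core E k l ↔ ∃ S : Finset V, satisfiesKL E k l S ∧ v ∈ S := by
  simp [core, Finset.mem_sup]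

theorem subset_core {S : Finset V} (hS : satisfiesKL E k l S) : S ⊆ core E k l :=
  fun _ hv => mem_core.2 ⟨S, hS, hv⟩

theorem satisfiesKL_core (E : V → V → Prop) [DecidableRel E] (k l : ℕ) :
    satisfiesKL E k l (core E k l) := by
  intro v hv
  obtain ⟨S, hS, hvS⟩ := mem_core.1 hv
  have hsub : S ⊆ core E k l := subset_core hS
  exact ⟨(hS v hvS).1.trans (card_le_card (filter_subset_filter _ hsub)),
    (hS v hvS).2.trans (card_le_card (filter_subset_filter _ hsub))⟩

theorem core_subset_core {k' l' : ℕ} (hk : k' ≤ k) (hl : l' ≤ l) : core E k l ⊆ core E k' l' :=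
  subset_core fun v hv =>
    ⟨hk.trans (satisfiesKL_core E k l v hv).1, hl.trans (satisfiesKL_core E k l v hv).2⟩

theorem le_card_of_mem_core (hv : v ∈ core E k l) : k ≤ Fintype.card V ∧ l ≤ Fintype.card V :=
  ⟨(satisfiesKL_core E k l v hv).1.trans (card_le_univ _),
    (satisfiesKL_core E k l v hv).2.trans (card_le_univ _)⟩

theorem finite_setOf_mem_core (E : V → V → Prop) [DecidableRel E] (v : V) :
    {p : ℕ × ℕ | v ∈ core E p.1 p.2}.Finite :=
  (Set.finite_Iic (Fintype.card V, Fintype.card V)).subset fun _ hp => le_card_of_mem_core hp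

theorem skyline_iff_maximal {p : ℕ × ℕ} :
    skyline E v p ↔ Maximal (fun q : ℕ × ℕ => v ∈ core E q.1 q.2) p := by
  rw [maximal_iff]
  refine and_congr_right fun _ => ⟨fun hmax q hq hpq => ?_, fun hmax => ?_⟩
  · by_contra hne
    exact hmax ⟨q, ⟨hpq.1, hpq.2, hne⟩, hq⟩
  · rintro ⟨q, ⟨hk, hl, hne⟩, hq⟩
    exact hne (hmax hq ⟨hk, hl⟩)

theorem exists_skyline_ge (hv : v ∈ core E k l) :
    ∃ p : ℕ × ℕ, skyline E v p ∧ k ≤ p.1 ∧ l ≤ p.2 := by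
  obtain ⟨p, hle, hmax⟩ := (finite_setOf_mem_core E v).exists_le_maximal (a := (k, l)) hv
  exact ⟨p, skyline_iff_maximal.2 hmax, hle.1, hle.2⟩

theorem mem_core_iff_exists_skyline_ge :
    v ∈ core E k l ↔ ∃ p : ℕ × ℕ, skyline E v p ∧ k ≤ p.1 ∧ l ≤ p.2 :=
  ⟨exists_skyline_ge, fun ⟨_, hp, hk, hl⟩ => core_subset_core hk hl hp.1⟩

theorem coe_inN_core (E : V → V → Prop) [DecidableRel E] (k l : ℕ) (v : V) :
    (inN E (core E k l) v : Set V) =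
      {u | E u v ∧ ∃ p : ℕ × ℕ, skyline E u p ∧ k ≤ p.1 ∧ l ≤ p.2} := by
  ext u
  simp only [inN, coe_filter, Set.mem_ofPred_eq, ← mem_core_iff_exists_skyline_ge, and_comm]

theorem coe_outN_core (E : V → V → Prop) [DecidableRel E] (k l : ℕ) (v : V) :
    (outN E (core E k l) v : Set V) =
      {u | E v u ∧ ∃ p : ℕ × ℕ, skyline E u p ∧ k ≤ p.1 ∧ l ≤ p.2} := by
  ext u
  simp only [outN, coe_filter, Set.mem_ofPred_eq, ← mem_core_iff_exists_skyline_ge, and_comm]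

theorem skyline_neighbor_property_I_general (hv : v ∈ core E k l) :
    k ≤ Set.ncard {u : V | E u v ∧ ∃ p : ℕ × ℕ, skyline E u p ∧ k ≤ p.1 ∧ l ≤ p.2} ∧
    l ≤ Set.ncard {u : V | E v u ∧ ∃ p : ℕ × ℕ, skyline E u p ∧ k ≤ p.1 ∧ l ≤ p.2} := by
  rw [← coe_inN_core, ← coe_outN_core, Set.ncard_coe_finset, Set.ncard_coe_finset]
  exact satisfiesKL_core E k l v hv

end CoreAndSkyline

/-- **Property 5.1(I).** If `(kv,lv)` is a skyline coreness of `v`, then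
`v` has at least `kv` in-neighbors having a skyline coreness dominating `(kv,lv)`, and
at least `lv` such out-neighbors. -/
theorem skyline_neighbor_property_I (E : V → V → Prop) [DecidableRel E]
    (v : V) (kv lv : ℕ) (h : skyline E v (kv, lv)) :
    kv ≤ Set.ncard {u : V | E u v ∧ ∃ p : ℕ × ℕ, skyline E u p ∧ kv ≤ p.1 ∧ lv ≤ p.2} ∧
    lv ≤ Set.ncard {u : V | E v u ∧ ∃ p : ℕ × ℕ, skyline E u p ∧ kv ≤ p.1 ∧ lv ≤ p.2} :=
  skyline_neighbor_property_I_general h.1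
end
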